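/- arXiv:2411.08763 — 12 statements merged into one kernel-verified Lean document; each statement's English description precedes it below -/
import Mathlib

section
/- Let (B, S, π) be a return risk measurement regime with associated MARRM η. If C and S are cones and π is positively homogeneous, then η is positively homogeneous: η(λX) = λ·η(X) for all λ ∈ (0,∞) and X ∈ C (with the convention λ·(+∞) = +∞). -/
open MeasureTheory Filter Set ENNReal

/-- The set of strictly positive random variables (positive representatives of
elements of `L⁰₊₊`). -/
def L0pos (Ω : Type*) : Set (Ω → ℝ) := {X | ∀ ω, 0 < X ω}

/-- The multi-asset return risk measure (MARRM) associated with the security set `S`,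
the relative acceptance set `B` and the pricing map `π`:
`η(X) = inf {π(Z) : Z ∈ S, X/Z ∈ B}`, with `inf ∅ = ∞`. -/
noncomputable def marrm {Ω : Type*} (S B : Set (Ω → ℝ)) (π : (Ω → ℝ) → ℝ) (X : Ω → ℝ) : ℝ≥0∞ :=
  sInf ((fun Z => ENNReal.ofReal (π Z)) '' {Z | Z ∈ S ∧ (fun ω => X ω / Z ω) ∈ B})

theorem marrm_smul_le_aux {Ω : Type*} (S B : Set (Ω → ℝ)) (π : (Ω → ℝ) → ℝ)
    (hScone : ∀ l : ℝ, 0 < l → ∀ Z ∈ S, (fun ω => l * Z ω) ∈ S)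
    (hπhom : ∀ l : ℝ, 0 < l → ∀ Z ∈ S, π (fun ω => l * Z ω) = l * π Z)
    (l : ℝ) (hl : 0 < l) (X : Ω → ℝ) :
    marrm S B π (fun ω => l * X ω) ≤ ENNReal.ofReal l * marrm S B π X := by
  have h0 : ENNReal.ofReal l ≠ 0 := by simpa using hl
  rw [mul_comm, ← ENNReal.div_le_iff_le_mul (Or.inl h0) (Or.inl ENNReal.ofReal_ne_top)]
  refine le_sInf ?_
  rintro _ ⟨Z, ⟨hZ, hB⟩, rfl⟩
  rw [ENNReal.div_le_iff_le_mul (Or.inl h0) (Or.inl ENNReal.ofReal_ne_top), mul_comm]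
  refine sInf_le ⟨fun ω => l * Z ω, ⟨hScone l hl Z hZ, ?_⟩, ?_⟩
  · have : (fun ω => l * X ω / (l * Z ω)) = fun ω => X ω / Z ω := by
      funext ω
      exact mul_div_mul_left _ _ hl.ne'
    rw [this]
    exact hB
  · simp only
    rw [hπhom l hl Z hZ, ENNReal.ofReal_mul hl.le]

theorem marrm_positively_homogeneous {Ω : Type*} [MeasurableSpace Ω] (P : Measure Ω) [IsProbabilityMeasure P]
    (C S K B : Set (Ω → ℝ)) (π : (Ω → ℝ) → ℝ)
    (hCne : C.Nonempty) (hCpos : C ⊆ L0pos Ω)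
    (hSne : S.Nonempty) (hSpos : S ⊆ L0pos Ω)
    (hπpos : ∀ Z ∈ S, 0 < π Z)
    (hKne : K.Nonempty) (hKpos : K ⊆ L0pos Ω)
    (hcompat : ∀ X ∈ C, ∀ Z ∈ S, (fun ω => X ω / Z ω) ∈ K)
    (hBne : B.Nonempty) (hBsub : B ⊆ K) (hBproper : B ≠ K)
    (hBmono : ∀ X ∈ B, ∀ Y ∈ K, (∀ᵐ ω ∂P, Y ω ≤ X ω) → Y ∈ B)
    (hCcone : ∀ l : ℝ, 0 < l → ∀ X ∈ C, (fun ω => l * X ω) ∈ C)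
    (hScone : ∀ l : ℝ, 0 < l → ∀ Z ∈ S, (fun ω => l * Z ω) ∈ S)
    (hπhom : ∀ l : ℝ, 0 < l → ∀ Z ∈ S, π (fun ω => l * Z ω) = l * π Z) :
    ∀ l : ℝ, 0 < l → ∀ X ∈ C,
      marrm S B π (fun ω => l * X ω) = ENNReal.ofReal l * marrm S B π X := by
  intro l hl X _
  refine le_antisymm (marrm_smul_le_aux S B π hScone hπhom l hl X) ?_
  have h := marrm_smul_le_aux S B π hScone hπhom l⁻¹ (inv_pos.mpr hl) (fun ω => l * X ω)
  have hX : (fun ω => l⁻¹ * (l * X ω)) = X := by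
    funext ω
    exact inv_mul_cancel_left₀ hl.ne' _
  rw [hX] at h
  calc ENNReal.ofReal l * marrm S B π X
      ≤ ENNReal.ofReal l * (ENNReal.ofReal l⁻¹ * marrm S B π (fun ω => l * X ω)) := by gcongr
    _ = marrm S B π (fun ω => l * X ω) := by
      rw [← mul_assoc, ← ENNReal.ofReal_mul hl.le, mul_inv_cancel₀ hl.ne', ENNReal.ofReal_one,
        one_mul]
end

section
/- Let (B, S, π) be a return risk measurement regime with associated MARRM η. If C and S are star-shaped sets and π is star-shaped, then η is star-shaped: η(λX) ≤ λ·η(X) for all λ ∈ (0,1) and X ∈ C (with the convention λ·(+∞) = +∞). -/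
open MeasureTheory Filter Set ENNReal

theorem marrm_star_shaped {Ω : Type*} [MeasurableSpace Ω] (P : Measure Ω) [IsProbabilityMeasure P]
    (C S K B : Set (Ω → ℝ)) (π : (Ω → ℝ) → ℝ)
    (hCne : C.Nonempty) (hCpos : C ⊆ L0pos Ω)
    (hSne : S.Nonempty) (hSpos : S ⊆ L0pos Ω)
    (hπpos : ∀ Z ∈ S, 0 < π Z)
    (hKne : K.Nonempty) (hKpos : K ⊆ L0pos Ω)
    (hcompat : ∀ X ∈ C, ∀ Z ∈ S, (fun ω => X ω / Z ω) ∈ K)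
    (hBne : B.Nonempty) (hBsub : B ⊆ K) (hBproper : B ≠ K)
    (hBmono : ∀ X ∈ B, ∀ Y ∈ K, (∀ᵐ ω ∂P, Y ω ≤ X ω) → Y ∈ B)
    (hCstar : ∀ l ∈ Set.Ioo (0:ℝ) 1, ∀ X ∈ C, (fun ω => l * X ω) ∈ C)
    (hSstar : ∀ l ∈ Set.Ioo (0:ℝ) 1, ∀ Z ∈ S, (fun ω => l * Z ω) ∈ S)
    (hπstar : ∀ l ∈ Set.Ioo (0:ℝ) 1, ∀ Z ∈ S, π (fun ω => l * Z ω) ≤ l * π Z) :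
    ∀ l ∈ Set.Ioo (0:ℝ) 1, ∀ X ∈ C,
      marrm S B π (fun ω => l * X ω) ≤ ENNReal.ofReal l * marrm S B π X := by
  intro l hl X hX
  have hl0 : ENNReal.ofReal l ≠ 0 := by simpa using hl.1
  have hlt : ENNReal.ofReal l ≠ ⊤ := ENNReal.ofReal_ne_top
  rw [mul_comm, ← ENNReal.div_le_iff_le_mul (Or.inl hl0) (Or.inl hlt)]
  refine le_sInf ?_
  rintro _ ⟨Z, ⟨hZ, hB⟩, rfl⟩
  rw [ENNReal.div_le_iff_le_mul (Or.inl hl0) (Or.inl hlt), mul_comm]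
  have hmem : (fun ω => l * X ω / (l * Z ω)) ∈ B := by
    have heq : (fun ω => l * X ω / (l * Z ω)) = fun ω => X ω / Z ω := by
      funext ω
      exact mul_div_mul_left _ _ hl.1.ne'
    rw [heq]
    exact hB
  calc marrm S B π (fun ω => l * X ω)
      ≤ ENNReal.ofReal (π (fun ω => l * Z ω)) :=
        sInf_le ⟨fun ω => l * Z ω, ⟨hSstar l hl Z hZ, hmem⟩, rfl⟩
    _ ≤ ENNReal.ofReal (l * π Z) := ENNReal.ofReal_le_ofReal (hπstar l hl Z hZ)
    _ = ENNReal.ofReal l * ENNReal.ofReal (π Z) := ENNReal.ofReal_mul hl.1.le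
end

section
/- (Reduction lemma, part 1.) Let (B, S, π) be a return risk measurement regime with associated MARRM η. If S is a cone and π is positively homogeneous, then for every X ∈ C one has η(X) = inf{λ > 0 : X/λ ∈ B·S_1}, where S_1 = {Z ∈ S : π(Z) = 1} and B·S_1 = {Y·Z : Y ∈ B, Z ∈ S_1}. -/
open MeasureTheory Filter Set ENNReal

/-- The product `A · D = {Y · Z : Y ∈ A, Z ∈ D}` of two sets of random variables. -/
def mulSet {Ω : Type*} (A D : Set (Ω → ℝ)) : Set (Ω → ℝ) :=
  {W | ∃ Y ∈ A, ∃ Z ∈ D, W = fun ω => Y ω * Z ω}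

theorem marrm_reduction_lemma {Ω : Type*} [MeasurableSpace Ω] (P : Measure Ω) [IsProbabilityMeasure P]
    (C S K B : Set (Ω → ℝ)) (π : (Ω → ℝ) → ℝ)
    (hCne : C.Nonempty) (hCpos : C ⊆ L0pos Ω)
    (hSne : S.Nonempty) (hSpos : S ⊆ L0pos Ω)
    (hπpos : ∀ Z ∈ S, 0 < π Z)
    (hKne : K.Nonempty) (hKpos : K ⊆ L0pos Ω)
    (hcompat : ∀ X ∈ C, ∀ Z ∈ S, (fun ω => X ω / Z ω) ∈ K)
    (hBne : B.Nonempty) (hBsub : B ⊆ K) (hBproper : B ≠ K)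
    (hBmono : ∀ X ∈ B, ∀ Y ∈ K, (∀ᵐ ω ∂P, Y ω ≤ X ω) → Y ∈ B)
    (hScone : ∀ l : ℝ, 0 < l → ∀ Z ∈ S, (fun ω => l * Z ω) ∈ S)
    (hπhom : ∀ l : ℝ, 0 < l → ∀ Z ∈ S, π (fun ω => l * Z ω) = l * π Z) :
    ∀ X ∈ C,
      marrm S B π X =
        sInf (ENNReal.ofReal ''
          {l : ℝ | 0 < l ∧ (fun ω => X ω / l) ∈ mulSet B {Z | Z ∈ S ∧ π Z = 1}}) := by
  intro X hX
  unfold marrm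
  congr 1
  ext r
  constructor
  · rintro ⟨Z, ⟨hZ, hB⟩, rfl⟩
    have hp := hπpos Z hZ
    refine ⟨π Z, ⟨hp, fun ω => X ω / Z ω, hB, fun ω => (π Z)⁻¹ * Z ω,
      ⟨hScone _ (inv_pos.mpr hp) Z hZ, ?_⟩, ?_⟩, rfl⟩
    · rw [hπhom _ (inv_pos.mpr hp) Z hZ]
      exact inv_mul_cancel₀ hp.ne'
    · funext ω
      have h1 : Z ω ≠ 0 := (hSpos hZ ω).ne'
      have h2 := hp.ne'
      field_simp
  · rintro ⟨l, ⟨hl, Y, hY, Z, ⟨hZ, hZ1⟩, hE⟩, rfl⟩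
    refine ⟨fun ω => l * Z ω, ⟨hScone l hl Z hZ, ?_⟩, ?_⟩
    · have : (fun ω => X ω / (l * Z ω)) = Y := by
        funext ω
        have h1 : Z ω ≠ 0 := (hSpos hZ ω).ne'
        have h2 : X ω / l = Y ω * Z ω := congrFun hE ω
        rw [← div_div, h2, mul_div_cancel_right₀ _ h1]
      simpa only [this] using hY
    · simp only [hπhom l hl Z hZ, hZ1, mul_one]
end

section
/- (Reduction lemma, part 2.) Let (B, S, π) be a return risk measurement regime. If S is a cone and π is positively homogeneous, then the set B·S_1 is monotone relative to C in the following sense: for all X ∈ B·S_1 and all Y ∈ C with Y ≤ X a.s., it holds that Y ∈ B·S_1. Here S_1 = {Z ∈ S : π(Z) = 1} and B·S_1 = {W·Z : W ∈ B, Z ∈ S_1}. -/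
open MeasureTheory Filter Set ENNReal

theorem mulSet_monotone {Ω : Type*} [MeasurableSpace Ω] (P : Measure Ω) [IsProbabilityMeasure P]
    (C S K B : Set (Ω → ℝ)) (π : (Ω → ℝ) → ℝ)
    (hCne : C.Nonempty) (hCpos : C ⊆ L0pos Ω)
    (hSne : S.Nonempty) (hSpos : S ⊆ L0pos Ω)
    (hπpos : ∀ Z ∈ S, 0 < π Z)
    (hKne : K.Nonempty) (hKpos : K ⊆ L0pos Ω)
    (hcompat : ∀ X ∈ C, ∀ Z ∈ S, (fun ω => X ω / Z ω) ∈ K)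
    (hBne : B.Nonempty) (hBsub : B ⊆ K) (hBproper : B ≠ K)
    (hBmono : ∀ X ∈ B, ∀ Y ∈ K, (∀ᵐ ω ∂P, Y ω ≤ X ω) → Y ∈ B)
    (hScone : ∀ l : ℝ, 0 < l → ∀ Z ∈ S, (fun ω => l * Z ω) ∈ S)
    (hπhom : ∀ l : ℝ, 0 < l → ∀ Z ∈ S, π (fun ω => l * Z ω) = l * π Z) :
    ∀ X ∈ mulSet B {Z | Z ∈ S ∧ π Z = 1}, ∀ Y ∈ C, (∀ᵐ ω ∂P, Y ω ≤ X ω) →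
      Y ∈ mulSet B {Z | Z ∈ S ∧ π Z = 1} := by
  rintro X ⟨W, hW, Z, ⟨hZ, hZ1⟩, rfl⟩ Y hY hle
  refine ⟨fun ω => Y ω / Z ω, ?_, Z, ⟨hZ, hZ1⟩, ?_⟩
  · refine hBmono W hW _ (hcompat Y hY Z hZ) ?_
    filter_upwards [hle] with ω h
    exact (div_le_iff₀ (hSpos hZ ω)).2 h
  · funext ω
    exact (div_mul_cancel₀ _ (hSpos hZ ω).ne').symm
end

section
/- Let (B, S, π) be a return risk measurement regime with associated MARRM η. Assume that the sets C, B and S are log-star-shaped and that π is log-star-shaped. Then η is log-star-shaped: for all α ∈ (0,1) and all X ∈ C, η(X^α) ≤ η(X)^α (powers computed in [0,∞] with (+∞)^α = +∞). -/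
open MeasureTheory Filter Set ENNReal

theorem marrm_log_star_shaped {Ω : Type*} [MeasurableSpace Ω] (P : Measure Ω) [IsProbabilityMeasure P]
    (C S K B : Set (Ω → ℝ)) (π : (Ω → ℝ) → ℝ)
    (hCne : C.Nonempty) (hCpos : C ⊆ L0pos Ω)
    (hSne : S.Nonempty) (hSpos : S ⊆ L0pos Ω)
    (hπpos : ∀ Z ∈ S, 0 < π Z)
    (hKne : K.Nonempty) (hKpos : K ⊆ L0pos Ω)
    (hcompat : ∀ X ∈ C, ∀ Z ∈ S, (fun ω => X ω / Z ω) ∈ K)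
    (hBne : B.Nonempty) (hBsub : B ⊆ K) (hBproper : B ≠ K)
    (hBmono : ∀ X ∈ B, ∀ Y ∈ K, (∀ᵐ ω ∂P, Y ω ≤ X ω) → Y ∈ B)
    (hClss : ∀ a ∈ Set.Ioo (0:ℝ) 1, ∀ X ∈ C, (fun ω => X ω ^ a) ∈ C)
    (hBlss : ∀ a ∈ Set.Ioo (0:ℝ) 1, ∀ X ∈ B, (fun ω => X ω ^ a) ∈ B)
    (hSlss : ∀ a ∈ Set.Ioo (0:ℝ) 1, ∀ Z ∈ S, (fun ω => Z ω ^ a) ∈ S)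
    (hπlss : ∀ a ∈ Set.Ioo (0:ℝ) 1, ∀ Z ∈ S, π (fun ω => Z ω ^ a) ≤ π Z ^ a) :
    ∀ a ∈ Set.Ioo (0:ℝ) 1, ∀ X ∈ C,
      marrm S B π (fun ω => X ω ^ a) ≤ marrm S B π X ^ a := by
  intro a ha X hX
  have ha0 : 0 < a := ha.1
  rw [← ENNReal.rpow_inv_le_iff ha0]
  refine le_sInf ?_
  rintro _ ⟨Z, ⟨hZ, hXZ⟩, rfl⟩
  rw [ENNReal.rpow_inv_le_iff ha0]
  have hB : (fun ω => X ω ^ a / Z ω ^ a) ∈ B := by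
    have h := hBlss a ha _ hXZ
    have e : (fun ω => (X ω / Z ω) ^ a) = fun ω => X ω ^ a / Z ω ^ a := by
      funext ω
      exact Real.div_rpow (hCpos hX ω).le (hSpos hZ ω).le a
    rw [← e]
    exact h
  calc marrm S B π (fun ω => X ω ^ a)
      ≤ ENNReal.ofReal (π (fun ω => Z ω ^ a)) :=
        sInf_le ⟨fun ω => Z ω ^ a, ⟨hSlss a ha Z hZ, hB⟩, rfl⟩
    _ ≤ ENNReal.ofReal (π Z ^ a) := ENNReal.ofReal_le_ofReal (hπlss a ha Z hZ)
    _ = ENNReal.ofReal (π Z) ^ a := (ENNReal.ofReal_rpow_of_pos (hπpos Z hZ)).symm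
end

section
/- Let (B, S, π) be a return risk measurement regime with associated MARRM η. Assume that the sets C, B and S are logconvex and that π is quasi-logconvex. Then η is quasi-logconvex: for all X, Y ∈ C and α ∈ (0,1), η(X^α Y^{1−α}) ≤ max{η(X), η(Y)}. -/
open MeasureTheory Filter Set ENNReal

theorem marrm_quasi_logconvex {Ω : Type*} [MeasurableSpace Ω] (P : Measure Ω) [IsProbabilityMeasure P]
    (C S K B : Set (Ω → ℝ)) (π : (Ω → ℝ) → ℝ)
    (hCne : C.Nonempty) (hCpos : C ⊆ L0pos Ω)
    (hSne : S.Nonempty) (hSpos : S ⊆ L0pos Ω)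
    (hπpos : ∀ Z ∈ S, 0 < π Z)
    (hKne : K.Nonempty) (hKpos : K ⊆ L0pos Ω)
    (hcompat : ∀ X ∈ C, ∀ Z ∈ S, (fun ω => X ω / Z ω) ∈ K)
    (hBne : B.Nonempty) (hBsub : B ⊆ K) (hBproper : B ≠ K)
    (hBmono : ∀ X ∈ B, ∀ Y ∈ K, (∀ᵐ ω ∂P, Y ω ≤ X ω) → Y ∈ B)
    (hClc : ∀ X ∈ C, ∀ Y ∈ C, ∀ a ∈ Set.Ioo (0:ℝ) 1,
      (fun ω => X ω ^ a * Y ω ^ (1 - a)) ∈ C)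
    (hBlc : ∀ X ∈ B, ∀ Y ∈ B, ∀ a ∈ Set.Ioo (0:ℝ) 1,
      (fun ω => X ω ^ a * Y ω ^ (1 - a)) ∈ B)
    (hSlc : ∀ Z1 ∈ S, ∀ Z2 ∈ S, ∀ a ∈ Set.Ioo (0:ℝ) 1,
      (fun ω => Z1 ω ^ a * Z2 ω ^ (1 - a)) ∈ S)
    (hπqlc : ∀ Z1 ∈ S, ∀ Z2 ∈ S, ∀ a ∈ Set.Ioo (0:ℝ) 1,
      π (fun ω => Z1 ω ^ a * Z2 ω ^ (1 - a)) ≤ max (π Z1) (π Z2)) :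
    ∀ X ∈ C, ∀ Y ∈ C, ∀ a ∈ Set.Ioo (0:ℝ) 1,
      marrm S B π (fun ω => X ω ^ a * Y ω ^ (1 - a))
        ≤ max (marrm S B π X) (marrm S B π Y) := by
  intro X hX Y hY a ha
  refine le_of_forall_gt fun c hc => ?_
  obtain ⟨h1, h2⟩ := max_lt_iff.mp hc
  obtain ⟨_, ⟨Z1, ⟨hZ1, hB1⟩, rfl⟩, hc1⟩ := sInf_lt_iff.mp h1
  obtain ⟨_, ⟨Z2, ⟨hZ2, hB2⟩, rfl⟩, hc2⟩ := sInf_lt_iff.mp h2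
  refine sInf_lt_iff.mpr ⟨_, ⟨fun ω => Z1 ω ^ a * Z2 ω ^ (1 - a),
    ⟨hSlc Z1 hZ1 Z2 hZ2 a ha, ?_⟩, rfl⟩, ?_⟩
  · have h := hBlc _ hB1 _ hB2 a ha
    convert h using 1
    funext ω
    rw [Real.div_rpow (hCpos hX ω).le (hSpos hZ1 ω).le,
      Real.div_rpow (hCpos hY ω).le (hSpos hZ2 ω).le, div_mul_div_comm]
  · refine lt_of_le_of_lt (ENNReal.ofReal_le_ofReal (hπqlc Z1 hZ1 Z2 hZ2 a ha)) ?_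
    rcases max_choice (π Z1) (π Z2) with h | h <;> rw [h] <;> assumption
end

section
/- Let (B, S, π) be a return risk measurement regime with associated MARRM η. Suppose C = L^∞_{++}, that the constant random variable 1 belongs to B, and that there exists U ∈ int(L^∞_+) such that λU ∈ S for every λ > 0. Then η(X) < ∞ for every X ∈ C. -/
open MeasureTheory Filter Set ENNReal

/-- `L^∞₊₊`: strictly positive, (essentially) bounded random variables. -/
def LinftyPos {Ω : Type*} [MeasurableSpace Ω] (P : Measure Ω) : Set (Ω → ℝ) :=
  {X | (∀ ω, 0 < X ω) ∧ ∃ c : ℝ, ∀ᵐ ω ∂P, X ω ≤ c}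

/-- `int(L^∞₊)`: bounded random variables that are a.s. bounded below by a
positive constant. -/
def intLinftyPlus {Ω : Type*} [MeasurableSpace Ω] (P : Measure Ω) : Set (Ω → ℝ) :=
  {X | (∃ c : ℝ, ∀ᵐ ω ∂P, |X ω| ≤ c) ∧ ∃ ε : ℝ, 0 < ε ∧ ∀ᵐ ω ∂P, ε ≤ X ω}

theorem marrm_finite_of_Linfty {Ω : Type*} [MeasurableSpace Ω] (P : Measure Ω) [IsProbabilityMeasure P]
    (C S K B : Set (Ω → ℝ)) (π : (Ω → ℝ) → ℝ)
    (hCne : C.Nonempty) (hCpos : C ⊆ L0pos Ω)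
    (hSne : S.Nonempty) (hSpos : S ⊆ L0pos Ω)
    (hπpos : ∀ Z ∈ S, 0 < π Z)
    (hKne : K.Nonempty) (hKpos : K ⊆ L0pos Ω)
    (hcompat : ∀ X ∈ C, ∀ Z ∈ S, (fun ω => X ω / Z ω) ∈ K)
    (hBne : B.Nonempty) (hBsub : B ⊆ K) (hBproper : B ≠ K)
    (hBmono : ∀ X ∈ B, ∀ Y ∈ K, (∀ᵐ ω ∂P, Y ω ≤ X ω) → Y ∈ B)
    (hCeq : C = LinftyPos P)
    (hone : (fun _ => (1:ℝ)) ∈ B)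
    (hU : ∃ U ∈ intLinftyPlus P, ∀ l : ℝ, 0 < l → (fun ω => l * U ω) ∈ S) :
    ∀ X ∈ C, marrm S B π X < ⊤ := by
  intro X hX
  obtain ⟨U, ⟨_, ε, hε, hUε⟩, hUS⟩ := hU
  have hX' := hX
  rw [hCeq] at hX'
  obtain ⟨_, c, hc⟩ := hX'
  have hl : 0 < (|c| + 1) / ε := by positivity
  have hB : (fun ω => X ω / ((|c| + 1) / ε * U ω)) ∈ B := by
    refine hBmono _ hone _ (hcompat X hX _ (hUS _ hl)) ?_
    filter_upwards [hc, hUε] with ω h1 h2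
    have h3 : |c| + 1 ≤ (|c| + 1) / ε * U ω := by
      calc |c| + 1 = (|c| + 1) / ε * ε := by field_simp
        _ ≤ _ := by gcongr
    have h4 : 0 < (|c| + 1) / ε * U ω := by
      have := abs_nonneg c
      linarith
    rw [div_le_one h4]
    have := le_abs_self c
    linarith
  refine lt_of_le_of_lt (sInf_le ⟨_, ⟨hUS _ hl, hB⟩, rfl⟩) ENNReal.ofReal_lt_top
end

section
/- Let C = K = L^∞_{++}, let S = (0,∞) (the strictly positive constant random variables), let π(x) = x for x ∈ S, and let B be any relative acceptance set, i.e., a nonempty proper subset of K that is monotone. Then for every X ∈ int(L^∞_+), the associated MARRM satisfies η(X) > 0. -/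
open MeasureTheory Filter Set ENNReal

theorem marrm_pos_of_intLinfty {Ω : Type*} [MeasurableSpace Ω] (P : Measure Ω) [IsProbabilityMeasure P]
    (C S K B : Set (Ω → ℝ)) (π : (Ω → ℝ) → ℝ)
    (hCne : C.Nonempty) (hCpos : C ⊆ L0pos Ω)
    (hSne : S.Nonempty) (hSpos : S ⊆ L0pos Ω)
    (hπpos : ∀ Z ∈ S, 0 < π Z)
    (hKne : K.Nonempty) (hKpos : K ⊆ L0pos Ω)
    (hcompat : ∀ X ∈ C, ∀ Z ∈ S, (fun ω => X ω / Z ω) ∈ K)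
    (hBne : B.Nonempty) (hBsub : B ⊆ K) (hBproper : B ≠ K)
    (hBmono : ∀ X ∈ B, ∀ Y ∈ K, (∀ᵐ ω ∂P, Y ω ≤ X ω) → Y ∈ B)
    (hCeq : C = LinftyPos P) (hKeq : K = LinftyPos P)
    (hSeq : S = {Z | ∃ c : ℝ, 0 < c ∧ Z = fun _ => c})
    (hπid : ∀ c : ℝ, 0 < c → π (fun _ => c) = c) :
    ∀ X ∈ intLinftyPlus P, 0 < marrm S B π X := by
  rintro X ⟨-, ε, hε, hX⟩
  obtain ⟨Y, hYK, hYB⟩ : ∃ Y ∈ K, Y ∉ B := by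
    by_contra! h
    exact hBproper (Subset.antisymm hBsub h)
  obtain ⟨-, c, hc⟩ : Y ∈ LinftyPos P := hKeq ▸ hYK
  have hm : 0 < max c 1 := lt_max_of_lt_right one_pos
  have hpos : 0 < ENNReal.ofReal (ε / max c 1) := ENNReal.ofReal_pos.2 (div_pos hε hm)
  refine lt_of_lt_of_le hpos (le_sInf ?_)
  rintro _ ⟨Z, ⟨hZS, hZB⟩, rfl⟩
  rw [hSeq] at hZS
  obtain ⟨z, hz, rfl⟩ := hZS
  simp only [hπid z hz]
  apply ENNReal.ofReal_le_ofReal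
  by_contra! hlt
  apply hYB
  refine hBmono _ hZB Y hYK ?_
  filter_upwards [hX, hc] with ω h1 h2
  rw [lt_div_iff₀ hm] at hlt
  rw [le_div_iff₀ hz]
  have h3 : Y ω * z ≤ max c 1 * z :=
    mul_le_mul_of_nonneg_right (h2.trans (le_max_left _ _)) hz.le
  linarith [mul_comm z (max c 1)]
end

section
/- (Representation of a MARRM through a MARM.) In the RRM setting, let η be the MARRM associated with the return risk measurement regime (B_ρ̃, S, π) and let ρ be the associated MARM. Then for every X ∈ C one has η(X) = exp(ρ(log X)), where exp : [−∞,∞] → [0,∞] is extended by exp(−∞) = 0 and exp(+∞) = +∞. -/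
open MeasureTheory Filter Set ENNReal

/-- The image of a set of random variables under the pointwise logarithm,
e.g. `C_log = {log X : X ∈ C}`. -/
def logIm {Ω : Type*} (A : Set (Ω → ℝ)) : Set (Ω → ℝ) :=
  (fun X => fun ω => Real.log (X ω)) '' A

/-- The multi-asset risk measure (MARM) with security set `Slog`, acceptance set `Anu`
and pricing map `πlog`: `ρ(Y) = inf {πlog(L) : L ∈ Slog, Y - L ∈ Anu}`, with
values in `[-∞,∞]` and `inf ∅ = +∞`. -/
noncomputable def marm {Ω : Type*} (Slog Anu : Set (Ω → ℝ)) (πlog : (Ω → ℝ) → ℝ)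
    (Y : Ω → ℝ) : EReal :=
  sInf ((fun L => (πlog L : EReal)) '' {L | L ∈ Slog ∧ (fun ω => Y ω - L ω) ∈ Anu})

/-- The relative acceptance set `B_ρ̃ = {X ∈ K : ρ̃(X) ≤ 1}` induced by a
return risk measure `ρt` on `K`. -/
def rrmAccept {Ω : Type*} (K : Set (Ω → ℝ)) (ρt : (Ω → ℝ) → ℝ) : Set (Ω → ℝ) :=
  {X | X ∈ K ∧ ρt X ≤ 1}

/-- The MARM associated with a return risk measurement regime `(B_ρ̃, S, π)` in the
RRM setting: security set `S_log`, acceptance set `A_ν = {Y ∈ K_log : ν(Y) ≤ 0}` with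
`ν = log ∘ ρ̃ ∘ exp`, and pricing map `π_log = log ∘ π ∘ exp`. -/
noncomputable def marmOf {Ω : Type*} (S K : Set (Ω → ℝ)) (π ρt : (Ω → ℝ) → ℝ) :
    (Ω → ℝ) → EReal :=
  marm (logIm S) {L | L ∈ logIm K ∧ Real.log (ρt (fun ω => Real.exp (L ω))) ≤ 0}
    (fun L => Real.log (π (fun ω => Real.exp (L ω))))

/-- The extension of `exp` to `[-∞,∞] → [0,∞]` with `exp(-∞) = 0`, `exp(+∞) = +∞`. -/
noncomputable def expE (x : EReal) : ℝ≥0∞ :=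
  if x = ⊥ then 0 else if x = ⊤ then ⊤ else ENNReal.ofReal (Real.exp x.toReal)

theorem expE_eq_exp (x : EReal) : expE x = EReal.exp x := by
  induction x using EReal.rec <;> simp [expE]

theorem expE_sInf (s : Set EReal) : expE (sInf s) = sInf (expE '' s) := by
  have h : expE = fun x => EReal.exp x := funext expE_eq_exp
  rw [h]
  have := ENNReal.logOrderIso.symm.map_sInf s
  rw [sInf_image]
  exact this

theorem marrm_eq_exp_marm_log {Ω : Type*} [MeasurableSpace Ω] (P : Measure Ω) [IsProbabilityMeasure P]
    (C S K : Set (Ω → ℝ)) (π ρt : (Ω → ℝ) → ℝ)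
    (hCne : C.Nonempty) (hCpos : C ⊆ L0pos Ω)
    (hSne : S.Nonempty) (hSpos : S ⊆ L0pos Ω)
    (hπpos : ∀ Z ∈ S, 0 < π Z)
    (hKne : K.Nonempty) (hKpos : K ⊆ L0pos Ω)
    (hKcone : ∀ l : ℝ, 0 < l → ∀ X ∈ K, (fun ω => l * X ω) ∈ K)
    (hKinf : LinftyPos P ⊆ K)
    (hcompat : ∀ X ∈ C, ∀ Z ∈ S, (fun ω => X ω / Z ω) ∈ K)
    (hCmul : ∀ X ∈ C, ∀ Y ∈ C, (fun ω => X ω * Y ω) ∈ C)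
    (hCone : (fun _ => (1:ℝ)) ∈ C)
    (hCinv : ∀ X ∈ C, (fun ω => (X ω)⁻¹) ∈ C)
    (hρmono : ∀ X ∈ K, ∀ Y ∈ K, (∀ᵐ ω ∂P, X ω ≤ Y ω) → ρt X ≤ ρt Y)
    (hρhom : ∀ l : ℝ, 0 < l → ∀ X ∈ K, ρt (fun ω => l * X ω) = l * ρt X)
    (hρpos : ∀ X ∈ K, 0 < ρt X)
    (hρone : ρt (fun _ => (1:ℝ)) = 1)
    : ∀ X ∈ C,
      marrm S (rrmAccept K ρt) π X
        = expE (marmOf S K π ρt (fun ω => Real.log (X ω))) := by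
  intro X hX
  have hXp := hCpos hX
  have hel : ∀ Z ∈ L0pos Ω, (fun ω => Real.exp (Real.log (Z ω))) = Z :=
    fun Z hZ => funext fun ω => Real.exp_log (hZ ω)
  unfold marmOf marm marrm
  rw [expE_sInf, Set.image_image]
  congr 1
  have hexp : ∀ Z ∈ S, expE ((Real.log (π Z) : ℝ) : EReal) = ENNReal.ofReal (π Z) := by
    intro Z hZ
    rw [expE_eq_exp, EReal.exp_coe, Real.exp_log (hπpos Z hZ)]
  have hquot : ∀ Z ∈ S, (fun ω => Real.log (X ω) - Real.log (Z ω))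
      = (fun ω => Real.log (X ω / Z ω)) := fun Z hZ =>
    funext fun ω => (Real.log_div (hXp ω).ne' (hSpos hZ ω).ne').symm
  have hlog : ∀ Z ∈ S, (Real.log (ρt (fun ω => Real.exp (Real.log (X ω / Z ω)))) ≤ 0 ↔
      ρt (fun ω => X ω / Z ω) ≤ 1) := by
    intro Z hZ
    have hK := hcompat X hX Z hZ
    have := hel _ (hKpos hK)
    rw [this]
    exact Real.log_nonpos_iff (hρpos _ hK).le
  ext y
  constructor
  · rintro ⟨Z, ⟨hZ, hK, hle⟩, rfl⟩
    refine ⟨fun ω => Real.log (Z ω), ⟨⟨Z, hZ, rfl⟩, ?_⟩, ?_⟩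
    · simp only [hquot Z hZ]
      exact ⟨⟨_, hK, rfl⟩, (hlog Z hZ).2 hle⟩
    · simp only [hel Z (hSpos hZ)]
      exact hexp Z hZ
  · rintro ⟨_, ⟨⟨Z, hZ, rfl⟩, hA⟩, rfl⟩
    simp only [hquot Z hZ] at hA
    refine ⟨Z, ⟨hZ, hcompat X hX Z hZ, (hlog Z hZ).1 hA.2⟩, ?_⟩
    simp only [hel Z (hSpos hZ)]
    exact (hexp Z hZ).symm
end

section
/- In the RRM setting, suppose additionally that C is a cone (λC ⊆ C for all λ > 0). Then the MARRM η is positively homogeneous (η(λX) = λ·η(X) for all λ > 0 and X ∈ C, with λ·(+∞) = +∞) if and only if the associated MARM ρ is cash-additive, i.e., ρ(Y + r) = ρ(Y) + r for all Y ∈ C_log and r ∈ ℝ (extended-real arithmetic). -/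
open MeasureTheory Filter Set ENNReal

theorem exp_log_fun {Ω : Type*} {Z : Ω → ℝ} (hZ : ∀ ω, 0 < Z ω) :
    (fun ω => Real.exp (Real.log (Z ω))) = Z := by
  funext ω
  exact Real.exp_log (hZ ω)

theorem marmOf_log_eq {Ω : Type*} (C S K : Set (Ω → ℝ)) (π ρt : (Ω → ℝ) → ℝ)
    (hCpos : C ⊆ L0pos Ω) (hSpos : S ⊆ L0pos Ω)
    (hπpos : ∀ Z ∈ S, 0 < π Z)
    (hcompat : ∀ X ∈ C, ∀ Z ∈ S, (fun ω => X ω / Z ω) ∈ K)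
    (hρpos : ∀ X ∈ K, 0 < ρt X) (X : Ω → ℝ) (hX : X ∈ C) :
    marmOf S K π ρt (fun ω => Real.log (X ω)) =
      ENNReal.log (marrm S (rrmAccept K ρt) π X) := by
  have key : ∀ Z ∈ S, (fun ω => Real.log (X ω) - Real.log (Z ω)) =
      fun ω => Real.log (X ω / Z ω) := by
    intro Z hZ
    funext ω
    rw [Real.log_div (hCpos hX ω).ne' (hSpos hZ ω).ne']
  have key2 : ∀ Z ∈ S, (fun ω => Real.exp (Real.log (X ω / Z ω))) = fun ω => X ω / Z ω :=
    fun Z hZ => exp_log_fun fun ω => div_pos (hCpos hX ω) (hSpos hZ ω)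
  have e : ENNReal.log (marrm S (rrmAccept K ρt) π X) =
      sInf (ENNReal.logOrderIso '' ((fun Z => ENNReal.ofReal (π Z)) ''
        {Z | Z ∈ S ∧ (fun ω => X ω / Z ω) ∈ rrmAccept K ρt})) := by
    rw [sInf_image, ← OrderIso.map_sInf]
    rfl
  rw [e]
  unfold marmOf marm
  congr 1
  ext v
  constructor
  · rintro ⟨L, ⟨⟨Z, hZ, rfl⟩, h⟩, rfl⟩
    refine ⟨_, ⟨Z, ⟨hZ, hcompat X hX Z hZ, ?_⟩, rfl⟩, ?_⟩
    · simp only [key Z hZ] at h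
      have h2 := h.2
      simp only [key2 Z hZ] at h2
      exact (Real.log_nonpos_iff (hρpos _ (hcompat X hX Z hZ)).le).1 h2
    · simp only [exp_log_fun (hSpos hZ), ENNReal.logOrderIso_apply]
      exact ENNReal.log_ofReal_of_pos (hπpos Z hZ)
  · rintro ⟨_, ⟨Z, ⟨hZ, hK, h1⟩, rfl⟩, rfl⟩
    refine ⟨_, ⟨⟨Z, hZ, rfl⟩, ?_⟩, ?_⟩
    · simp only [key Z hZ, Set.mem_ofPred_eq, key2 Z hZ]
      exact ⟨⟨_, hK, rfl⟩, (Real.log_nonpos_iff (hρpos _ hK).le).2 h1⟩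
    · simp only [exp_log_fun (hSpos hZ), ENNReal.logOrderIso_apply]
      exact (ENNReal.log_ofReal_of_pos (hπpos Z hZ)).symm

theorem marrm_posHom_iff_marm_cashAdditive {Ω : Type*} [MeasurableSpace Ω] (P : Measure Ω) [IsProbabilityMeasure P]
    (C S K : Set (Ω → ℝ)) (π ρt : (Ω → ℝ) → ℝ)
    (hCne : C.Nonempty) (hCpos : C ⊆ L0pos Ω)
    (hSne : S.Nonempty) (hSpos : S ⊆ L0pos Ω)
    (hπpos : ∀ Z ∈ S, 0 < π Z)
    (hKne : K.Nonempty) (hKpos : K ⊆ L0pos Ω)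
    (hKcone : ∀ l : ℝ, 0 < l → ∀ X ∈ K, (fun ω => l * X ω) ∈ K)
    (hKinf : LinftyPos P ⊆ K)
    (hcompat : ∀ X ∈ C, ∀ Z ∈ S, (fun ω => X ω / Z ω) ∈ K)
    (hCmul : ∀ X ∈ C, ∀ Y ∈ C, (fun ω => X ω * Y ω) ∈ C)
    (hCone : (fun _ => (1:ℝ)) ∈ C)
    (hCinv : ∀ X ∈ C, (fun ω => (X ω)⁻¹) ∈ C)
    (hρmono : ∀ X ∈ K, ∀ Y ∈ K, (∀ᵐ ω ∂P, X ω ≤ Y ω) → ρt X ≤ ρt Y)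
    (hρhom : ∀ l : ℝ, 0 < l → ∀ X ∈ K, ρt (fun ω => l * X ω) = l * ρt X)
    (hρpos : ∀ X ∈ K, 0 < ρt X)
    (hρone : ρt (fun _ => (1:ℝ)) = 1)
    (hCcone : ∀ l : ℝ, 0 < l → ∀ X ∈ C, (fun ω => l * X ω) ∈ C) :
    (∀ l : ℝ, 0 < l → ∀ X ∈ C,
        marrm S (rrmAccept K ρt) π (fun ω => l * X ω)
          = ENNReal.ofReal l * marrm S (rrmAccept K ρt) π X)
      ↔ (∀ Y ∈ logIm C, ∀ r : ℝ,
        marmOf S K π ρt (fun ω => Y ω + r) = marmOf S K π ρt Y + (r : EReal)) := by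
  have main := marmOf_log_eq C S K π ρt hCpos hSpos hπpos hcompat hρpos
  have shift : ∀ l : ℝ, 0 < l → ∀ X ∈ C, (fun ω => Real.log (X ω) + Real.log l) =
      fun ω => Real.log (l * X ω) := by
    intro l hl X hX
    funext ω
    rw [Real.log_mul hl.ne' (hCpos hX ω).ne', add_comm]
  constructor
  · rintro h _ ⟨X, hX, rfl⟩ r
    have hl := Real.exp_pos r
    have hs := shift _ hl X hX
    rw [Real.log_exp] at hs
    simp only [hs]
    rw [main _ (hCcone _ hl X hX), main X hX, h _ hl X hX, ENNReal.log_mul_add,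
      ENNReal.log_ofReal_of_pos hl, Real.log_exp, add_comm]
  · intro h l hl X hX
    have h1 := h _ ⟨X, hX, rfl⟩ (Real.log l)
    simp only [shift l hl X hX] at h1
    rw [main _ (hCcone _ hl X hX), main X hX] at h1
    apply ENNReal.log_injective
    rw [h1, ENNReal.log_mul_add, ENNReal.log_ofReal_of_pos hl, add_comm]
end

section
/- In the RRM setting, suppose additionally that C is star-shaped (λC ⊆ C for all λ ∈ (0,1)). Then the MARRM η is star-shaped (η(λX) ≤ λ·η(X) for all λ ∈ (0,1), X ∈ C) if and only if the associated MARM ρ is cash-superadditive, i.e., ρ(Y + r) ≤ ρ(Y) + r for all Y ∈ C_log and all r ∈ (−∞, 0) (extended-real arithmetic). -/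
open MeasureTheory Filter Set ENNReal

theorem marmOf_eq_log_marrm {Ω : Type*} (S K : Set (Ω → ℝ)) (π ρt : (Ω → ℝ) → ℝ)
    (hSpos : S ⊆ L0pos Ω) (hπpos : ∀ Z ∈ S, 0 < π Z) (hKpos : K ⊆ L0pos Ω)
    (hρpos : ∀ X ∈ K, 0 < ρt X) (X : Ω → ℝ) (hX : X ∈ L0pos Ω) :
    marmOf S K π ρt (fun ω => Real.log (X ω))
      = ENNReal.log (marrm S (rrmAccept K ρt) π X) := by
  have hexp : ∀ Z ∈ L0pos Ω, (fun ω => Real.exp (Real.log (Z ω))) = Z := by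
    intro Z hZ
    funext ω
    exact Real.exp_log (hZ ω)
  have h1 : ENNReal.log (marrm S (rrmAccept K ρt) π X)
      = ENNReal.logOrderIso (marrm S (rrmAccept K ρt) π X) := rfl
  rw [h1]
  unfold marmOf marm marrm
  rw [OrderIso.map_sInf_eq_sInf_symm_preimage, ← OrderIso.image_eq_preimage_symm]
  congr 1
  ext y
  have key : ∀ Z ∈ S, ((fun ω => Real.log (X ω) - Real.log (Z ω)) ∈
      {L | L ∈ logIm K ∧ Real.log (ρt (fun ω => Real.exp (L ω))) ≤ 0}
      ↔ (fun ω => X ω / Z ω) ∈ rrmAccept K ρt) := by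
    intro Z hZ
    have e1 : (fun ω => Real.log (X ω) - Real.log (Z ω)) = fun ω => Real.log (X ω / Z ω) := by
      funext ω
      rw [Real.log_div (hX ω).ne' (hSpos hZ ω).ne']
    have hQ : (fun ω => X ω / Z ω) ∈ L0pos Ω := fun ω => div_pos (hX ω) (hSpos hZ ω)
    have e2 := hexp _ hQ
    rw [e1]
    simp only [mem_setOf_eq, rrmAccept]
    rw [e2]
    have hK : (fun ω => Real.log (X ω / Z ω)) ∈ logIm K ↔ (fun ω => X ω / Z ω) ∈ K := by
      constructor
      · rintro ⟨W, hW, hWe⟩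
        have : W = fun ω => X ω / Z ω := by
          rw [← hexp W (hKpos hW), ← e2]
          funext ω
          exact congrArg Real.exp (congrFun hWe ω)
        rwa [← this]
      · intro h
        exact ⟨_, h, rfl⟩
    rw [hK]
    refine and_congr_right fun h => ?_
    exact Real.log_nonpos_iff (hρpos _ h).le
  constructor
  · rintro ⟨L, ⟨⟨Z, hZ, rfl⟩, hA⟩, rfl⟩
    refine ⟨_, ⟨Z, ⟨hZ, (key Z hZ).1 hA⟩, rfl⟩, ?_⟩
    simp only [ENNReal.logOrderIso_apply]
    rw [hexp Z (hSpos hZ), ENNReal.log_ofReal_of_pos (hπpos Z hZ)]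
  · rintro ⟨_, ⟨Z, ⟨hZ, hA⟩, rfl⟩, rfl⟩
    refine ⟨_, ⟨⟨Z, hZ, rfl⟩, (key Z hZ).2 hA⟩, ?_⟩
    simp only [ENNReal.logOrderIso_apply]
    rw [hexp Z (hSpos hZ), ENNReal.log_ofReal_of_pos (hπpos Z hZ)]

theorem marrm_starShaped_iff_marm_cashSuperadditive {Ω : Type*} [MeasurableSpace Ω] (P : Measure Ω) [IsProbabilityMeasure P]
    (C S K : Set (Ω → ℝ)) (π ρt : (Ω → ℝ) → ℝ)
    (hCne : C.Nonempty) (hCpos : C ⊆ L0pos Ω)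
    (hSne : S.Nonempty) (hSpos : S ⊆ L0pos Ω)
    (hπpos : ∀ Z ∈ S, 0 < π Z)
    (hKne : K.Nonempty) (hKpos : K ⊆ L0pos Ω)
    (hKcone : ∀ l : ℝ, 0 < l → ∀ X ∈ K, (fun ω => l * X ω) ∈ K)
    (hKinf : LinftyPos P ⊆ K)
    (hcompat : ∀ X ∈ C, ∀ Z ∈ S, (fun ω => X ω / Z ω) ∈ K)
    (hCmul : ∀ X ∈ C, ∀ Y ∈ C, (fun ω => X ω * Y ω) ∈ C)
    (hCone : (fun _ => (1:ℝ)) ∈ C)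
    (hCinv : ∀ X ∈ C, (fun ω => (X ω)⁻¹) ∈ C)
    (hρmono : ∀ X ∈ K, ∀ Y ∈ K, (∀ᵐ ω ∂P, X ω ≤ Y ω) → ρt X ≤ ρt Y)
    (hρhom : ∀ l : ℝ, 0 < l → ∀ X ∈ K, ρt (fun ω => l * X ω) = l * ρt X)
    (hρpos : ∀ X ∈ K, 0 < ρt X)
    (hρone : ρt (fun _ => (1:ℝ)) = 1)
    (hCstar : ∀ l ∈ Set.Ioo (0:ℝ) 1, ∀ X ∈ C, (fun ω => l * X ω) ∈ C) :
    (∀ l ∈ Set.Ioo (0:ℝ) 1, ∀ X ∈ C,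
        marrm S (rrmAccept K ρt) π (fun ω => l * X ω)
          ≤ ENNReal.ofReal l * marrm S (rrmAccept K ρt) π X)
      ↔ (∀ Y ∈ logIm C, ∀ r : ℝ, r < 0 →
        marmOf S K π ρt (fun ω => Y ω + r) ≤ marmOf S K π ρt Y + (r : EReal)) := by
  have hlog := marmOf_eq_log_marrm S K π ρt hSpos hπpos hKpos hρpos
  have key : ∀ l : ℝ, 0 < l → ∀ X ∈ C,
      (marrm S (rrmAccept K ρt) π (fun ω => l * X ω)
          ≤ ENNReal.ofReal l * marrm S (rrmAccept K ρt) π X ↔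
        marmOf S K π ρt (fun ω => Real.log (X ω) + Real.log l)
          ≤ marmOf S K π ρt (fun ω => Real.log (X ω)) + (Real.log l : EReal)) := by
    intro l hl X hX
    have hX' := hCpos hX
    have e : (fun ω => Real.log (X ω) + Real.log l) = fun ω => Real.log (l * X ω) := by
      funext ω
      rw [Real.log_mul hl.ne' (hX' ω).ne', add_comm]
    rw [e, hlog _ hX', hlog (fun ω => l * X ω) (fun ω => mul_pos hl (hX' ω)),
      ← ENNReal.log_ofReal_of_pos hl, add_comm, ← ENNReal.log_mul_add]
    exact (ENNReal.logOrderIso.le_iff_le).symm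
  constructor
  · rintro h _ ⟨X, hX, rfl⟩ r hr
    have := (key (Real.exp r) (Real.exp_pos r) X hX).1
      (h _ ⟨Real.exp_pos r, by simpa using hr⟩ X hX)
    simpa only [Real.log_exp] using this
  · intro h l hl X hX
    exact (key l hl.1 X hX).2 (h _ ⟨X, hX, rfl⟩ _ (Real.log_neg hl.1 hl.2))
end

section
/- In the RRM setting, suppose additionally that C_log is convex and closed under multiplication by positive scalars (αY ∈ C_log for all α > 0, Y ∈ C_log). Then the associated MARM ρ is positively homogeneous (ρ(αY) = α·ρ(Y) for all α > 0, Y ∈ C_log, extended-real arithmetic) if and only if the MARRM η satisfies η(X^α) = η(X)^α for all X ∈ C and all α > 0 (powers in [0,∞]). -/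
open MeasureTheory Filter Set ENNReal

theorem marm_posHom_iff_marrm_powerHom {Ω : Type*} [MeasurableSpace Ω] (P : Measure Ω) [IsProbabilityMeasure P]
    (C S K : Set (Ω → ℝ)) (π ρt : (Ω → ℝ) → ℝ)
    (hCne : C.Nonempty) (hCpos : C ⊆ L0pos Ω)
    (hSne : S.Nonempty) (hSpos : S ⊆ L0pos Ω)
    (hπpos : ∀ Z ∈ S, 0 < π Z)
    (hKne : K.Nonempty) (hKpos : K ⊆ L0pos Ω)
    (hKcone : ∀ l : ℝ, 0 < l → ∀ X ∈ K, (fun ω => l * X ω) ∈ K)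
    (hKinf : LinftyPos P ⊆ K)
    (hcompat : ∀ X ∈ C, ∀ Z ∈ S, (fun ω => X ω / Z ω) ∈ K)
    (hCmul : ∀ X ∈ C, ∀ Y ∈ C, (fun ω => X ω * Y ω) ∈ C)
    (hCone : (fun _ => (1:ℝ)) ∈ C)
    (hCinv : ∀ X ∈ C, (fun ω => (X ω)⁻¹) ∈ C)
    (hρmono : ∀ X ∈ K, ∀ Y ∈ K, (∀ᵐ ω ∂P, X ω ≤ Y ω) → ρt X ≤ ρt Y)
    (hρhom : ∀ l : ℝ, 0 < l → ∀ X ∈ K, ρt (fun ω => l * X ω) = l * ρt X)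
    (hρpos : ∀ X ∈ K, 0 < ρt X)
    (hρone : ρt (fun _ => (1:ℝ)) = 1)
    (hClogconv : ∀ Y1 ∈ logIm C, ∀ Y2 ∈ logIm C, ∀ a ∈ Set.Ioo (0:ℝ) 1,
      (fun ω => a * Y1 ω + (1 - a) * Y2 ω) ∈ logIm C)
    (hClogcone : ∀ a : ℝ, 0 < a → ∀ Y ∈ logIm C, (fun ω => a * Y ω) ∈ logIm C) :
    (∀ a : ℝ, 0 < a → ∀ Y ∈ logIm C,
        marmOf S K π ρt (fun ω => a * Y ω) = (a : EReal) * marmOf S K π ρt Y)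
      ↔ (∀ X ∈ C, ∀ a : ℝ, 0 < a →
        marrm S (rrmAccept K ρt) π (fun ω => X ω ^ a)
          = marrm S (rrmAccept K ρt) π X ^ a) := by
  have key := marmOf_log_eq C S K π ρt hCpos hSpos hπpos hcompat hρpos
  have hpow : ∀ X ∈ C, ∀ a : ℝ, (fun ω => Real.log (X ω ^ a))
      = fun ω => a * Real.log (X ω) := fun X hX a => funext fun ω =>
    Real.log_rpow (hCpos hX ω) a
  have hpowC : ∀ X ∈ C, ∀ a : ℝ, 0 < a → (fun ω => X ω ^ a) ∈ C := by
    intro X hX a ha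
    obtain ⟨W, hW, hWe⟩ := hClogcone a ha _ ⟨X, hX, rfl⟩
    have : (fun ω => X ω ^ a) = W := by
      funext ω
      have h := congrFun hWe ω
      simp only at h
      rw [← Real.exp_log (hCpos hW ω), h, Real.rpow_def_of_pos (hCpos hX ω), mul_comm]
    rw [this]
    exact hW
  have key2 : ∀ X ∈ C, ∀ a : ℝ, 0 < a →
      marmOf S K π ρt (fun ω => a * Real.log (X ω))
        = ENNReal.log (marrm S (rrmAccept K ρt) π (fun ω => X ω ^ a)) := by
    intro X hX a ha
    rw [← key _ (hpowC X hX a ha), hpow X hX a]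
  constructor
  · intro h X hX a ha
    have h1 := h a ha _ ⟨X, hX, rfl⟩
    simp only at h1
    rw [key2 X hX a ha, key X hX, ← ENNReal.log_rpow] at h1
    exact ENNReal.log_injective h1
  · rintro h a ha _ ⟨X, hX, rfl⟩
    simp only
    rw [key2 X hX a ha, key X hX, ← ENNReal.log_rpow, h X hX a ha]
end
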